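/- Fix δ ≥ 0, a symbol a of order 0, and the bump β, and set b = √2 sin((θ₁−θ₂+π)/2). For j ≥ 1 define H(r₁,r₂;θ₁−θ₂) = 2^{−j(3/2+δ)} β(r₁+r₂) ∫₀^∞ e^{i 2^j (r₁ r₂/(r₁+r₂)) s²} ψ_{3,m}(s) ds, where ψ_{3,m}(s) = (r₁+r₂)^{−3/2−δ} a(2^j(r₁+r₂)) · sin(θ₁−θ₂+π) / (s²/2 + 2 sin²((θ₁−θ₂+π)/2)). Let χ ∈ C_c^∞(ℝ) be an even bump function supported in [−ε, ε] with 0 < ε ≪ 1 sufficiently small. Then: (i) for every p ≥ 6 there is a constant C, independent of j, such that ‖ ∫₀^∞ ∫₀^{2π} χ(b) H(r₁,r₂;θ₁−θ₂) f(r₂,θ₂) dθ₂ r₂ dr₂ ‖_{L^p(ℝ²)} ≤ C 2^{−j(3/2+δ)} 2^{−2j/p} ‖f‖_{L^p(ℝ²)} for all j ≥ 1; (ii) for every p with 4 ≤ p < 6 and every ε′ ∈ (0,1) there is a constant C = C(ε′), independent of j, such that ‖ ∫₀^∞ ∫₀^{2π} χ(b) H(r₁,r₂;θ₁−θ₂)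 f(r₂,θ₂) dθ₂ r₂ dr₂ ‖_{L^p(ℝ²)} ≤ C 2^{−j(3/2+δ)} 2^{−j(2/p − ε′)} ‖f‖_{L^p(ℝ²)} for all j ≥ 1. -/

import Mathlib

open MeasureTheory Real Set

noncomputable section

/-- A symbol of order `0` on `(0, ∞)`. -/
def IsSymbol0 (a : ℝ → ℂ) : Prop :=
  ContDiffOn ℝ (⊤ : ℕ∞) a (Set.Ioi 0) ∧ (∃ M : ℝ, ∀ r > (0 : ℝ), ‖a r‖ ≤ M) ∧
    ∀ N : ℕ, ∃ C : ℝ, ∀ r > (0 : ℝ),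
      ‖iteratedDerivWithin N a (Set.Ioi 0) r‖ ≤ C * r ^ (-(N : ℝ))

/-- `ψ_{3,m}(s)`, with `φ = θ₁ - θ₂`. -/
def psi3m (δ : ℝ) (a : ℝ → ℂ) (j : ℕ) (r₁ r₂ φ s : ℝ) : ℂ :=
  (((r₁ + r₂) ^ (-(3 / 2 + δ)) : ℝ) : ℂ) * a ((2 : ℝ) ^ (j : ℝ) * (r₁ + r₂)) *
    ((Real.sin (φ + Real.pi) /
        (s ^ 2 / 2 + 2 * Real.sin ((φ + Real.pi) / 2) ^ 2) : ℝ) : ℂ)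

/-- The kernel `H` with quadratic phase. -/
def Hker (δ : ℝ) (a : ℝ → ℂ) (β : ℝ → ℝ) (j : ℕ) (r₁ r₂ φ : ℝ) : ℂ :=
  (((2 : ℝ) ^ (-(j : ℝ) * (3 / 2 + δ)) : ℝ) : ℂ) * ((β (r₁ + r₂) : ℝ) : ℂ) *
    ∫ s in Set.Ioi (0 : ℝ),
      Complex.exp (Complex.I *
        (((2 : ℝ) ^ (j : ℝ) * (r₁ * r₂ / (r₁ + r₂)) * s ^ 2 : ℝ) : ℂ)) *
        psi3m δ a j r₁ r₂ φ s

/-- `b = √2 sin((θ₁ - θ₂ + π)/2)`, as a function of `φ = θ₁ - θ₂`. -/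
def bb (φ : ℝ) : ℝ := Real.sqrt 2 * Real.sin ((φ + Real.pi) / 2)

open scoped ENNReal NNReal

/-- The `L^p(ℝ²)` norm of a function written in polar coordinates. -/
def polarLp (p : ℝ) (g : ℝ → ℝ → ℂ) : ℝ≥0∞ :=
  (∫⁻ r in Set.Ioi (0 : ℝ),
      (∫⁻ θ in Set.Ico (0 : ℝ) (2 * Real.pi), (‖g r θ‖₊ : ℝ≥0∞) ^ p) *
        ENNReal.ofReal r) ^ (1 / p)

/-- The operator with kernel `χ(b) H`. -/
def TH (δ : ℝ) (a : ℝ → ℂ) (β χ : ℝ → ℝ) (j : ℕ) (f : ℝ → ℝ → ℂ) (r₁ θ₁ : ℝ) : ℂ :=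
  ∫ r₂ in Set.Ioi (0 : ℝ),
    (∫ θ₂ in Set.Ico (0 : ℝ) (2 * Real.pi),
      ((χ (bb (θ₁ - θ₂)) : ℝ) : ℂ) * Hker δ a β j r₁ r₂ (θ₁ - θ₂) * f r₂ θ₂) * (r₂ : ℂ)


lemma osc_g_int (b : ℝ) (hb : 0 < b) :
    IntegrableOn (fun s : ℝ => 1 / (s ^ 2 / 2 + b ^ 2)) (Ioi 0) ∧
    ∫ s in Ioi (0:ℝ), 1 / (s ^ 2 / 2 + b ^ 2) = π / √2 / b := by
  have h2 : 0 < √2 := by positivity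
  have hs : √2 ^ 2 = 2 := by simp
  have e : (fun s : ℝ => 1 / (s ^ 2 / 2 + b ^ 2)) =
      fun s => (1 / b ^ 2) * (fun x : ℝ => (1 + x ^ 2)⁻¹) ((√2 * b)⁻¹ * s) := by
    ext s
    have : (√2 * b) ^ 2 = 2 * b ^ 2 := by rw [mul_pow, hs]
    simp only [mul_pow, inv_pow, hs]
    field_simp
    ring
  constructor
  · rw [e]
    apply Integrable.const_mul
    apply Integrable.integrableOn
    exact integrable_inv_one_add_sq.comp_mul_left' (by positivity)
  · rw [e, integral_const_mul, integral_comp_mul_left_Ioi (fun x : ℝ => (1 + x ^ 2)⁻¹) 0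
      (show 0 < (√2 * b)⁻¹ by positivity)]
    simp only [mul_zero, integral_Ioi_inv_one_add_sq, sub_zero, smul_eq_mul, inv_inv, arctan_zero]
    field_simp
    nlinarith

lemma osc_bound (l b : ℝ) (hl : 0 < l) (hb : 0 < b) :
    ‖∫ s in Ioi (0:ℝ), Complex.exp (Complex.I * ((l * s ^ 2 : ℝ) : ℂ)) *
      ((1 / (s ^ 2 / 2 + b ^ 2) : ℝ) : ℂ)‖ ≤ 2 / (√l * b ^ 2) := by
  set g : ℝ → ℝ := fun s => 1 / (s ^ 2 / 2 + b ^ 2) with hg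
  have hgpos : ∀ s, 0 < g s := fun s => by simp only [hg]; positivity
  have hgle : ∀ s, g s ≤ 1 / b ^ 2 := fun s => by
    simp only [hg]; gcongr; nlinarith [sq_nonneg s]
  set e : ℝ → ℂ := fun s => Complex.exp (Complex.I * ((l * s ^ 2 : ℝ) : ℂ)) with he
  have hen : ∀ s, ‖e s‖ = 1 := fun s => by
    simp only [he]; rw [mul_comm]; exact Complex.norm_exp_ofReal_mul_I _
  have hec : Continuous e := by simp only [he]; fun_prop
  have hint : IntegrableOn (fun s => e s * (g s : ℂ)) (Ioi 0) := by
    have := (osc_g_int b hb).1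
    refine Integrable.mono (this.ofReal (𝕜 := ℂ)) ?_ ?_
    · apply Continuous.aestronglyMeasurable
      apply hec.mul
      apply Complex.continuous_ofReal.comp
      simp only [hg]
      exact Continuous.div continuous_const (by fun_prop) (fun s => by positivity)
    · refine ae_of_all _ fun s => ?_
      simp [hen, hg]
  set s0 : ℝ := (√l)⁻¹ with hs0
  have hsl : 0 < √l := Real.sqrt_pos.2 hl
  have hs0p : 0 < s0 := by positivity
  have hsplit : ∫ s in Ioi (0:ℝ), e s * (g s : ℂ) =
      (∫ s in Ioc (0:ℝ) s0, e s * (g s : ℂ)) + ∫ s in Ioi s0, e s * (g s : ℂ) := by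
    rw [← Ioc_union_Ioi_eq_Ioi hs0p.le]
    apply setIntegral_union (Ioc_disjoint_Ioi le_rfl) measurableSet_Ioi
    · exact hint.mono_set Ioc_subset_Ioi_self
    · exact hint.mono_set (Ioi_subset_Ioi hs0p.le)
  have h1 : ‖∫ s in Ioc (0:ℝ) s0, e s * (g s : ℂ)‖ ≤ 1 / b ^ 2 * s0 := by
    have := norm_setIntegral_le_of_norm_le_const (μ := volume) (s := Ioc (0:ℝ) s0)
      (f := fun s => e s * (g s : ℂ)) (C := 1 / b ^ 2) (by simp) (fun s _ => by
        rw [norm_mul, hen, one_mul, Complex.norm_real, Real.norm_of_nonneg (hgpos s).le]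
        exact hgle s)
    simpa [hs0p.le] using this
  set G : ℝ → ℝ := fun s => g s / (2 * l * s) with hG
  set G' : ℝ → ℝ := fun s => (- s / (s ^ 2 / 2 + b ^ 2) ^ 2 * (2 * l * s) - g s * (2 * l)) / (2 * l * s) ^ 2
  have hGd : ∀ s > 0, HasDerivAt G (G' s) s := by
    intro s hs
    have hgd : HasDerivAt g (- s / (s ^ 2 / 2 + b ^ 2) ^ 2) s := by
      have h1 : HasDerivAt (fun s : ℝ => s ^ 2 / 2 + b ^ 2) s s := by
        exact (((hasDerivAt_pow 2 s).div_const 2).add_const (b ^ 2)).congr_deriv (by simp)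
      have h3 : g = (fun s : ℝ => s ^ 2 / 2 + b ^ 2)⁻¹ := by ext x; simp [hg]
      rw [h3]
      exact h1.inv (by positivity)
    have h2 : HasDerivAt (fun s : ℝ => 2 * l * s) (2 * l) s := by
      simpa using (hasDerivAt_id s).const_mul (2 * l)
    exact hgd.div h2 (by positivity)
  have hG'neg : ∀ s > 0, G' s ≤ 0 := by
    intro s hs
    apply div_nonpos_of_nonpos_of_nonneg _ (by positivity)
    have := hgpos s
    have : 0 ≤ s / (s ^ 2 / 2 + b ^ 2) ^ 2 * (2 * l * s) := by positivity
    rw [neg_div, neg_mul]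
    nlinarith [mul_pos (hgpos s) hl]
  have hGpos : ∀ s > 0, 0 ≤ G s := fun s hs => by
    have := hgpos s
    simp only [hG]; positivity
  have hGlim : Filter.Tendsto G Filter.atTop (nhds 0) := by
    have hz : Filter.Tendsto (fun s : ℝ => (1 / b ^ 2 / (2 * l)) * s⁻¹) Filter.atTop (nhds 0) := by
      have := (tendsto_inv_atTop_zero (𝕜 := ℝ)).const_mul (1 / b ^ 2 / (2 * l))
      rwa [mul_zero] at this
    refine squeeze_zero' ?_ ?_ hz
    · filter_upwards [Filter.eventually_gt_atTop 0] with s hs using hGpos s hs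
    · filter_upwards [Filter.eventually_gt_atTop 0] with s hs
      have := hgle s
      calc g s / (2 * l * s) ≤ (1 / b ^ 2) / (2 * l * s) := by gcongr
        _ = _ := by field_simp
  have hG'int : IntegrableOn G' (Ioi s0) :=
    integrableOn_Ioi_deriv_of_nonpos' (fun x hx => hGd x (hs0p.trans_le hx))
      (fun x hx => hG'neg x (hs0p.trans hx)) hGlim
  have hG'val : ∫ s in Ioi s0, G' s = 0 - G s0 :=
    integral_Ioi_of_hasDerivAt_of_tendsto' (fun x hx => hGd x (hs0p.trans_le hx)) hG'int hGlim
  have hed : ∀ s, HasDerivAt e (e s * (Complex.I * ((2 * l * s : ℝ) : ℂ))) s := by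
    intro s
    have h1 : HasDerivAt (fun s : ℝ => l * s ^ 2) (2 * l * s) s := by
      exact ((hasDerivAt_pow 2 s).const_mul l).congr_deriv (by simp; ring)
    exact (h1.ofReal_comp.const_mul Complex.I).cexp
  have hFd : ∀ s > 0, HasDerivAt (fun s => e s * (G s : ℂ))
      (Complex.I * (e s * (g s : ℂ)) + e s * (G' s : ℂ)) s := by
    intro s hs
    refine ((hed s).mul (hGd s hs).ofReal_comp).congr_deriv ?_
    have : ((g s : ℝ) : ℂ) = ((2 * l * s : ℝ) : ℂ) * (G s : ℂ) := by
      rw [← Complex.ofReal_mul]; congr 1; simp only [hG]; field_simp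
    rw [this]; ring
  have hFlim : Filter.Tendsto (fun s => e s * (G s : ℂ)) Filter.atTop (nhds 0) := by
    rw [tendsto_zero_iff_norm_tendsto_zero]
    have := hGlim.norm
    simpa [hen] using this
  have heG'int : IntegrableOn (fun s => e s * (G' s : ℂ)) (Ioi s0) := by
    refine Integrable.mono (hG'int.ofReal (𝕜 := ℂ)) ?_ ?_
    · exact hec.aestronglyMeasurable.mul (hG'int.ofReal (𝕜 := ℂ)).1
    · exact ae_of_all _ fun s => by simp [hen]
  have hint2 := hint.mono_set (Ioi_subset_Ioi hs0p.le : Ioi s0 ⊆ Ioi 0)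
  have hmain := integral_Ioi_of_hasDerivAt_of_tendsto'
    (fun x hx => hFd x (hs0p.trans_le hx)) ((hint2.const_mul Complex.I).add heG'int) hFlim
  rw [integral_add (hint2.const_mul Complex.I) heG'int, integral_const_mul] at hmain
  have heG'n : ‖∫ s in Ioi s0, e s * (G' s : ℂ)‖ ≤ G s0 := by
    calc _ ≤ ∫ s in Ioi s0, ‖e s * (G' s : ℂ)‖ := norm_integral_le_integral_norm _
      _ = ∫ s in Ioi s0, - G' s := by
        apply setIntegral_congr_fun measurableSet_Ioi
        intro s hs
        simp only [norm_mul, hen, one_mul, Complex.norm_real, Real.norm_eq_abs]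
        exact abs_of_nonpos (hG'neg s (hs0p.trans hs))
      _ = G s0 := by rw [integral_neg, hG'val]; ring
  have h2 : ‖∫ s in Ioi s0, e s * (g s : ℂ)‖ ≤ G s0 + G s0 := by
    have e1 : Complex.I * ∫ s in Ioi s0, e s * (g s : ℂ) =
      -(e s0 * (G s0 : ℂ)) - ∫ s in Ioi s0, e s * (G' s : ℂ) := by
      rw [eq_sub_iff_add_eq, hmain]; ring
    have e2 : ‖∫ s in Ioi s0, e s * (g s : ℂ)‖ = ‖Complex.I * ∫ s in Ioi s0, e s * (g s : ℂ)‖ := by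
      simp
    rw [e2, e1]
    refine (norm_sub_le _ _).trans (add_le_add ?_ heG'n)
    rw [norm_neg, norm_mul, hen, one_mul, Complex.norm_real, Real.norm_of_nonneg (hGpos s0 hs0p)]
  have h3 : G s0 + G s0 ≤ 1 / b ^ 2 * s0 := by
    have hls : l * s0 = √l := by
      rw [hs0]; field_simp; rw [Real.sq_sqrt hl.le]
    have : G s0 + G s0 = g s0 * s0 := by
      have h5 : l * s0 * s0 = 1 := by rw [hls, hs0]; field_simp
      simp only [hG]
      field_simp
      linear_combination (2 * g s0) * (-h5)
    rw [this]
    gcongr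
    exact hgle s0
  change ‖∫ s in Ioi (0:ℝ), e s * (g s : ℂ)‖ ≤ _
  rw [hsplit]
  calc _ ≤ 1 / b ^ 2 * s0 + 1 / b ^ 2 * s0 := (norm_add_le _ _).trans (add_le_add h1 (h2.trans h3))
    _ = _ := by rw [hs0]; field_simp; norm_num
lemma bb_sq (φ : ℝ) : 2 * Real.sin ((φ + π) / 2) ^ 2 = |bb φ| ^ 2 := by
  rw [sq_abs, bb, mul_pow, Real.sq_sqrt (by norm_num)]

lemma abs_bb_le (φ : ℝ) : |bb φ| ≤ 2 := by
  rw [bb, abs_mul, abs_of_nonneg (Real.sqrt_nonneg _)]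
  have h1 : √2 ≤ 2 := by rw [Real.sqrt_le_left (by norm_num)]; norm_num
  have h2 := Real.abs_sin_le_one ((φ + π) / 2)
  nlinarith [abs_nonneg (Real.sin ((φ + π) / 2))]

lemma sin_le_bb (φ : ℝ) : |Real.sin (φ + π)| ≤ √2 * |bb φ| := by
  have h : Real.sin (φ + π) = √2 * bb φ * Real.cos ((φ + π) / 2) := by
    rw [bb]
    have : √2 * (√2 * Real.sin ((φ + π) / 2)) * Real.cos ((φ + π) / 2)
      = (√2 ^ 2) * Real.sin ((φ + π) / 2) * Real.cos ((φ + π) / 2) := by ring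
    rw [this, Real.sq_sqrt (by norm_num), ← Real.sin_two_mul]
    ring_nf
  rw [h, abs_mul, abs_mul, abs_of_nonneg (Real.sqrt_nonneg _)]
  exact mul_le_of_le_one_right (by positivity) (Real.abs_cos_le_one _)

lemma osc_sin_bound (l φ : ℝ) (hl : 0 < l) :
    ‖∫ s in Ioi (0:ℝ), Complex.exp (Complex.I * ((l * s ^ 2 : ℝ) : ℂ)) *
      ((Real.sin (φ + π) / (s ^ 2 / 2 + 2 * Real.sin ((φ + π) / 2) ^ 2) : ℝ) : ℂ)‖
      ≤ 8 / (1 + √l * |bb φ|) := by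
  rw [bb_sq]
  have hS := sin_le_bb φ
  have hs2 : √2 ≤ 3 / 2 := by rw [Real.sqrt_le_left (by norm_num)]; norm_num
  have hs2p : 0 < √2 := by positivity
  rcases (abs_nonneg (bb φ)).eq_or_lt with h0 | hb
  · have : Real.sin (φ + π) = 0 := by
      rw [← h0, mul_zero] at hS
      exact abs_eq_zero.1 (le_antisymm hS (abs_nonneg _))
    simp only [this, zero_div, Complex.ofReal_zero, mul_zero, integral_zero, norm_zero]
    positivity
  set b := |bb φ| with hbdef
  have hr : ∀ s : ℝ, Complex.exp (Complex.I * ((l * s ^ 2 : ℝ) : ℂ)) *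
      ((Real.sin (φ + π) / (s ^ 2 / 2 + b ^ 2) : ℝ) : ℂ) =
      (Real.sin (φ + π) : ℂ) * (Complex.exp (Complex.I * ((l * s ^ 2 : ℝ) : ℂ)) *
      ((1 / (s ^ 2 / 2 + b ^ 2) : ℝ) : ℂ)) := by
    intro s
    rw [div_eq_mul_one_div, Complex.ofReal_mul (Real.sin (φ + π))]; push_cast; ring
  simp_rw [hr]
  rw [integral_const_mul, norm_mul]
  have hn : ‖(Real.sin (φ + π) : ℂ)‖ ≤ √2 * b := by
    rw [Complex.norm_real]; exact hS
  set J := ‖∫ s in Ioi (0:ℝ), Complex.exp (Complex.I * ((l * s ^ 2 : ℝ) : ℂ)) *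
      ((1 / (s ^ 2 / 2 + b ^ 2) : ℝ) : ℂ)‖ with hJ
  have hJ1 : J ≤ π / √2 / b := by
    rw [← (osc_g_int b hb).2]
    refine (norm_integral_le_integral_norm _).trans (le_of_eq ?_)
    apply integral_congr_ae
    refine ae_of_all _ fun s => ?_
    simp only [norm_mul]
    rw [mul_comm Complex.I, Complex.norm_exp_ofReal_mul_I, one_mul, Complex.norm_real,
      Real.norm_of_nonneg (by positivity)]
  have hJ2 : J ≤ 2 / (√l * b ^ 2) := osc_bound l b hl hb
  have hJ0 : 0 ≤ J := norm_nonneg _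
  have hsl : 0 < √l := Real.sqrt_pos.2 hl
  rw [le_div_iff₀ (by positivity)]
  have k1 : J * b ≤ π / √2 := by
    rw [le_div_iff₀ hb] at hJ1; exact hJ1
  have k1' : J * b * √2 ≤ π := by rwa [le_div_iff₀ hs2p] at k1
  have k2 : J * (√l * b ^ 2) ≤ 2 := by rwa [le_div_iff₀ (by positivity)] at hJ2
  calc _ ≤ (√2 * b) * J * (1 + √l * b) := by gcongr
    _ = J * b * √2 + √2 * (J * (√l * b ^ 2)) := by ring
    _ ≤ π + (3/2) * 2 := by gcongr
    _ ≤ 8 := by linarith [Real.pi_lt_four]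

lemma alg_bound (Q r₁ r₂ b α : ℝ) (hQ : 1 ≤ Q) (h1 : 0 < r₁) (h2 : 0 < r₂)
    (h3 : r₁ + r₂ ≤ 4 / 3) (hb : 0 ≤ b) (hb2 : b ≤ 2) (hα : 0 ≤ α) (hα1 : α ≤ 1) :
    1 / (1 + √(Q ^ 2 * (r₁ * r₂ / (r₁ + r₂))) * b) ≤
      12 * ((Q ^ 2)⁻¹ + r₁) ^ (-α / 2) * r₂ ^ (-(1 / 2) : ℝ) * (1 + Q * b) ^ (-α) := by
  have hQ0 : 0 < Q := by linarith
  set x := √(Q ^ 2 * (r₁ * r₂ / (r₁ + r₂))) * b with hx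
  have hx0 : 0 ≤ x := by positivity
  set S := √((Q ^ 2)⁻¹ + r₁) with hS
  have hSp : 0 < S := by positivity
  have e1 : ((Q ^ 2)⁻¹ + r₁) ^ (-α / 2) = (S ^ α)⁻¹ := by
    rw [hS, Real.sqrt_eq_rpow, ← Real.rpow_mul (by positivity), ← Real.rpow_neg (by positivity)]
    congr 1; ring
  have e2 : r₂ ^ (-(1 / 2) : ℝ) = (√r₂)⁻¹ := by
    rw [Real.rpow_neg h2.le, Real.sqrt_eq_rpow]
  have e3 : (1 + Q * b) ^ (-α) = ((1 + Q * b) ^ α)⁻¹ := Real.rpow_neg (by positivity) _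
  have hr2 : √r₂ ≤ 2 := by rw [Real.sqrt_le_left (by norm_num)]; linarith
  have hr1 : √r₁ ≤ 2 := by rw [Real.sqrt_le_left (by norm_num)]; linarith
  have hr2p : 0 < √r₂ := Real.sqrt_pos.2 h2
  have hr1p : 0 < √r₁ := Real.sqrt_pos.2 h1
  have hSle : S ≤ Q⁻¹ + √r₁ := by
    rw [hS, Real.sqrt_le_iff]
    refine ⟨by positivity, ?_⟩
    have h6 : (Q ^ 2)⁻¹ = Q⁻¹ ^ 2 := by rw [inv_pow]
    have h7 : 0 < Q⁻¹ := by positivity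
    rw [h6]
    nlinarith [Real.sq_sqrt h1.le, mul_pos h7 hr1p]
  have hxlow : Q * √r₁ * √r₂ * b ≤ 2 * x := by
    have : Q * √r₁ * √r₂ ≤ 2 * √(Q ^ 2 * (r₁ * r₂ / (r₁ + r₂))) := by
      have h4 : Q * √r₁ * √r₂ = √(Q ^ 2 * (r₁ * r₂)) := by
        rw [Real.sqrt_mul (by positivity), Real.sqrt_sq hQ0.le, Real.sqrt_mul h1.le]; ring
      have h5 : (2:ℝ) = √4 := by
        rw [show (4:ℝ) = 2 ^ 2 by norm_num, Real.sqrt_sq (by norm_num)]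
      rw [h4, h5, ← Real.sqrt_mul (by norm_num)]
      apply Real.sqrt_le_sqrt
      have : r₁ * r₂ ≤ 4 * (r₁ * r₂ / (r₁ + r₂)) := by
        rw [mul_div_assoc', le_div_iff₀ (by positivity)]
        nlinarith [mul_pos h1 h2]
      nlinarith [sq_nonneg Q]
    rw [hx]
    calc _ ≤ (2 * √(Q ^ 2 * (r₁ * r₂ / (r₁ + r₂)))) * b := by gcongr
      _ = _ := by ring
  set y := S * (1 + Q * b) with hy
  have hyp : 0 < y := by positivity
  have hyr : y * √r₂ ≤ 10 * (1 + x) := by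
    have hQi : Q⁻¹ ≤ 1 := inv_le_one_of_one_le₀ hQ
    have hQi0 : 0 < Q⁻¹ := by positivity
    calc y * √r₂ ≤ (Q⁻¹ + √r₁) * (1 + Q * b) * √r₂ := by rw [hy]; gcongr
      _ = Q⁻¹ * √r₂ + (Q⁻¹ * Q) * b * √r₂ + √r₁ * √r₂ + Q * √r₁ * √r₂ * b := by ring
      _ ≤ 1 * 2 + 1 * 2 * 2 + √r₁ * √r₂ + 2 * x := by
        gcongr
        rw [inv_mul_cancel₀ hQ0.ne']
      _ ≤ _ := by
        have : √r₁ * √r₂ ≤ 4 := by nlinarith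
        linarith
  have hya : y ^ α * √r₂ ≤ 12 * (1 + x) := by
    have : y ^ α ≤ 1 + y := by
      rcases le_total y 1 with h | h
      · linarith [Real.rpow_le_one hyp.le h hα]
      · have := Real.rpow_le_rpow_of_exponent_le h hα1
        rw [Real.rpow_one] at this; linarith
    calc y ^ α * √r₂ ≤ (1 + y) * √r₂ := by gcongr
      _ ≤ _ := by nlinarith
  rw [e1, e2, e3]
  have : y ^ α = S ^ α * (1 + Q * b) ^ α := Real.mul_rpow hSp.le (by positivity)
  rw [this] at hya
  have p1 : 0 < S ^ α := by positivity
  have p2 : 0 < (1 + Q * b) ^ α := by positivity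
  have : 12 * (S ^ α)⁻¹ * (√r₂)⁻¹ * ((1 + Q * b) ^ α)⁻¹ =
    12 / (S ^ α * (1 + Q * b) ^ α * √r₂) := by field_simp
  rw [this, div_le_div_iff₀ (by positivity) (by positivity)]
  linarith

lemma kernel_bound (δ : ℝ) (hδ : 0 ≤ δ) (a : ℝ → ℂ) (ha : IsSymbol0 a)
    (β : ℝ → ℝ) (hβ : ContDiff ℝ (⊤ : ℕ∞) β)
    (hβs : Function.support β ⊆ Set.Icc (3 / 8) (4 / 3))
    (ε : ℝ) (χ : ℝ → ℝ) (hχ : ContDiff ℝ (⊤ : ℕ∞) χ)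
    (hχs : Function.support χ ⊆ Set.Icc (-ε) ε) :
    ∃ B : ℝ, 0 ≤ B ∧ ∀ (j : ℕ) (Q r₁ r₂ φ α : ℝ), 1 ≤ Q → (2:ℝ) ^ (j:ℝ) = Q ^ 2 →
      0 < r₁ → 0 < r₂ → 0 ≤ α → α ≤ 1 →
      (4 / 3 < r₁ + r₂ → ((χ (bb φ) : ℝ) : ℂ) * Hker δ a β j r₁ r₂ φ = 0) ∧
      ‖((χ (bb φ) : ℝ) : ℂ) * Hker δ a β j r₁ r₂ φ‖ ≤
        B * (2 : ℝ) ^ (-(j : ℝ) * (3 / 2 + δ)) * ((Q ^ 2)⁻¹ + r₁) ^ (-α / 2) *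
          r₂ ^ (-(1 / 2) : ℝ) * (1 + Q * |bb φ|) ^ (-α) := by
  obtain ⟨M, hM⟩ := ha.2.1
  have hcβ : HasCompactSupport β :=
    HasCompactSupport.of_support_subset_isCompact isCompact_Icc hβs
  have hcχ : HasCompactSupport χ :=
    HasCompactSupport.of_support_subset_isCompact isCompact_Icc hχs
  obtain ⟨Mβ, hMβ⟩ := hcβ.exists_bound_of_continuous hβ.continuous
  obtain ⟨Mχ, hMχ⟩ := hcχ.exists_bound_of_continuous hχ.continuous
  have hM0 : 0 ≤ M := (norm_nonneg _).trans (hM 1 one_pos)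
  have hMβ0 : 0 ≤ Mβ := (norm_nonneg _).trans (hMβ 0)
  have hMχ0 : 0 ≤ Mχ := (norm_nonneg _).trans (hMχ 0)
  refine ⟨Mχ * Mβ * (3 / 8 : ℝ) ^ (-(3 / 2 + δ)) * M * 8 * 12, by positivity, ?_⟩
  intro j Q r₁ r₂ φ α hQ hjQ h1 h2 hα hα1
  by_cases hs : r₁ + r₂ ∈ Icc (3 / 8 : ℝ) (4 / 3)
  swap
  · have hz : β (r₁ + r₂) = 0 := by
      by_contra h; exact hs (hβs h)
    have : ((χ (bb φ) : ℝ) : ℂ) * Hker δ a β j r₁ r₂ φ = 0 := by simp [Hker, hz]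
    refine ⟨fun _ => this, ?_⟩
    rw [this, norm_zero]
    positivity
  refine ⟨fun h => absurd hs.2 (not_le.2 h), ?_⟩
  have hI : ∫ s in Set.Ioi (0 : ℝ),
      Complex.exp (Complex.I *
        (((2 : ℝ) ^ (j : ℝ) * (r₁ * r₂ / (r₁ + r₂)) * s ^ 2 : ℝ) : ℂ)) *
        psi3m δ a j r₁ r₂ φ s =
      (((r₁ + r₂) ^ (-(3 / 2 + δ)) : ℝ) : ℂ) * a ((2 : ℝ) ^ (j : ℝ) * (r₁ + r₂)) *
      ∫ s in Set.Ioi (0 : ℝ),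
      Complex.exp (Complex.I *
        (((2 : ℝ) ^ (j : ℝ) * (r₁ * r₂ / (r₁ + r₂)) * s ^ 2 : ℝ) : ℂ)) *
        ((Real.sin (φ + Real.pi) /
        (s ^ 2 / 2 + 2 * Real.sin ((φ + Real.pi) / 2) ^ 2) : ℝ) : ℂ) := by
    rw [← integral_const_mul]
    congr 1; ext s; rw [psi3m]; ring
  have hosc := osc_sin_bound ((2 : ℝ) ^ (j : ℝ) * (r₁ * r₂ / (r₁ + r₂))) φ (by positivity)
  have halg := alg_bound Q r₁ r₂ |bb φ| α hQ h1 h2 hs.2 (abs_nonneg _) (abs_bb_le φ) hα hα1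
  rw [Hker, hI]
  simp only [norm_mul, Complex.norm_real]
  rw [Real.norm_of_nonneg (show (0:ℝ) ≤ 2 ^ (-(j : ℝ) * (3 / 2 + δ)) by positivity),
    Real.norm_of_nonneg (show (0:ℝ) ≤ (r₁ + r₂) ^ (-(3 / 2 + δ)) by positivity)]
  have hrr : (r₁ + r₂) ^ (-(3 / 2 + δ)) ≤ (3 / 8 : ℝ) ^ (-(3 / 2 + δ)) :=
    Real.rpow_le_rpow_of_nonpos (by norm_num) hs.1 (by linarith)
  have haa := hM ((2 : ℝ) ^ (j : ℝ) * (r₁ + r₂)) (by positivity)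
  rw [hjQ] at hosc haa ⊢
  have hosc2 := hosc.trans (show 8 / (1 + √(Q ^ 2 * (r₁ * r₂ / (r₁ + r₂))) * |bb φ|) ≤
    8 * (12 * ((Q ^ 2)⁻¹ + r₁) ^ (-α / 2) * r₂ ^ (-(1 / 2) : ℝ) * (1 + Q * |bb φ|) ^ (-α)) by
      rw [div_eq_mul_one_div]; gcongr)
  calc _ ≤ Mχ * (2 ^ (-(j : ℝ) * (3 / 2 + δ)) * Mβ * ((3 / 8 : ℝ) ^ (-(3 / 2 + δ)) * M *
        (8 * (12 * ((Q ^ 2)⁻¹ + r₁) ^ (-α / 2) * r₂ ^ (-(1 / 2) : ℝ) *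
          (1 + Q * |bb φ|) ^ (-α))))) := by
        gcongr
        · exact hMχ _
        · exact hMβ _
    _ = _ := by ring

lemma jensen_nm {X : Type*} [MeasurableSpace X] (μ : Measure X) (κ g : X → ℝ≥0∞)
    (hκ : Measurable κ) (hκt : ∀ x, κ x < ⊤) (p : ℝ) (hp : 1 < p) :
    (∫⁻ x, κ x * g x ∂μ) ^ p ≤ (∫⁻ x, κ x ∂μ) ^ (p - 1) * ∫⁻ x, κ x * g x ^ p ∂μ := by
  set ν := μ.withDensity κ with hν
  have e : ∀ g : X → ℝ≥0∞, ∫⁻ x, κ x * g x ∂μ = ∫⁻ x, g x ∂ν := fun g =>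
    (lintegral_withDensity_eq_lintegral_mul_non_measurable μ hκ (ae_of_all _ hκt) g).symm
  rw [e g, e (fun x => g x ^ p)]
  have e1 : ∫⁻ x, κ x ∂μ = ∫⁻ x, 1 ∂ν := by rw [← e (fun _ => 1)]; simp
  rw [e1]
  obtain ⟨h, hm, hle, heq⟩ := exists_measurable_le_lintegral_eq (μ := ν) g
  rw [heq]
  have hpq : p.HolderConjugate (p / (p - 1)) := Real.HolderConjugate.conjExponent hp
  have hH := ENNReal.lintegral_mul_le_Lp_mul_Lq ν hpq hm.aemeasurable
    (aemeasurable_const (b := (1 : ℝ≥0∞)))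
  simp only [Pi.mul_apply, mul_one, ENNReal.one_rpow] at hH
  have hp0 : 0 < p := by linarith
  have hp1 : 0 < p - 1 := by linarith
  calc (∫⁻ x, h x ∂ν) ^ p ≤ ((∫⁻ a, h a ^ p ∂ν) ^ (1 / p) *
        (∫⁻ a, 1 ∂ν) ^ (1 / (p / (p - 1)))) ^ p := by gcongr
    _ = (∫⁻ a, 1 ∂ν) ^ (p - 1) * ∫⁻ a, h a ^ p ∂ν := by
        rw [ENNReal.mul_rpow_of_nonneg _ _ hp0.le, ← ENNReal.rpow_mul, ← ENNReal.rpow_mul]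
        rw [show 1 / p * p = 1 by field_simp, show 1 / (p / (p - 1)) * p = p - 1 by field_simp,
          ENNReal.rpow_one, mul_comm]
    _ ≤ _ := by
        gcongr with x
        exact hle x

lemma sum_lintegral_le {X ι : Type*} [MeasurableSpace X] (μ : Measure X) (s : Finset ι)
    (F : ι → X → ℝ≥0∞) : ∑ i ∈ s, ∫⁻ x, F i x ∂μ ≤ ∫⁻ x, ∑ i ∈ s, F i x ∂μ := by
  classical
  induction s using Finset.induction_on with
  | empty => simp
  | insert a s ha ih =>
    rw [Finset.sum_insert ha]
    calc _ ≤ ∫⁻ x, F a x ∂μ + ∫⁻ x, ∑ i ∈ s, F i x ∂μ := by gcongr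
      _ ≤ ∫⁻ x, F a x + ∑ i ∈ s, F i x ∂μ := le_lintegral_add _ _
      _ = _ := by simp only [Finset.sum_insert ha]

lemma lintegral_grid (F : ℝ → ℝ≥0∞) (h : ℝ) (hh : 0 ≤ h) (n : ℕ) :
    ∫⁻ x in Ico 0 (n * h), F x = ∑ i ∈ Finset.range n, ∫⁻ x in Ico (i * h) ((i + 1) * h), F x := by
  induction n with
  | zero => simp
  | succ n ih =>
    rw [Finset.sum_range_succ, ← ih, ← lintegral_union measurableSet_Ico, Ico_union_Ico_eq_Ico]
    · push_cast; rfl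
    · positivity
    · nlinarith
    · exact Ico_disjoint_Ico_same

lemma bb_cont : Continuous bb := by unfold bb; fun_prop

def Wn (Q α φ : ℝ) : ℝ≥0∞ := ENNReal.ofReal ((1 + Q * |bb φ|) ^ (-α))

lemma Wn_meas (Q α : ℝ) : Measurable (Wn Q α) := by
  unfold Wn
  have := bb_cont.measurable
  fun_prop

lemma Wn_lt_top (Q α φ : ℝ) : Wn Q α φ < ⊤ := ENNReal.ofReal_lt_top

lemma bb_lip (x y : ℝ) : |bb x - bb y| ≤ |x - y| := by
  have h1 : √2 ≤ 2 := by rw [Real.sqrt_le_left (by norm_num)]; norm_num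
  have h2 : |Real.sin ((x + π) / 2) - Real.sin ((y + π) / 2)| ≤ |(x + π) / 2 - (y + π) / 2| := by
    have := Real.abs_sin_sub_sin_le ((x + π) / 2) ((y + π) / 2)
    exact this
  rw [bb, bb, ← mul_sub, abs_mul, abs_of_nonneg (Real.sqrt_nonneg _)]
  have h3 : (x + π) / 2 - (y + π) / 2 = (x - y) / 2 := by ring
  rw [h3, abs_div, abs_of_pos (show (0:ℝ) < 2 by norm_num)] at h2
  nlinarith [abs_nonneg (x - y), abs_nonneg (Real.sin ((x + π) / 2) - Real.sin ((y + π) / 2))]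

lemma Wn_comp (Q α : ℝ) (hQ : 1 ≤ Q) (hα : 0 ≤ α) (hα1 : α ≤ 1) (x y : ℝ)
    (h : Q * |x - y| ≤ 7) : Wn Q α x ≤ 8 * Wn Q α y := by
  unfold Wn
  rw [show (8 : ℝ≥0∞) = ENNReal.ofReal 8 by simp, ← ENNReal.ofReal_mul (by norm_num)]
  apply ENNReal.ofReal_le_ofReal
  have hQ0 : 0 < Q := by linarith
  have hb : |bb y| ≤ |bb x| + |x - y| := by
    have h1 := bb_lip x y
    have h2 := abs_sub_abs_le_abs_sub (bb y) (bb x)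
    rw [abs_sub_comm] at h2
    linarith
  have hx : 0 < 1 + Q * |bb x| := by positivity
  have hy : 0 < 1 + Q * |bb y| := by positivity
  have h1 : 1 + Q * |bb y| ≤ 8 * (1 + Q * |bb x|) := by
    have : Q * |bb y| ≤ Q * (|bb x| + |x - y|) := by gcongr
    have : 0 ≤ Q * |bb x| := by positivity
    nlinarith
  rw [Real.rpow_neg hx.le, Real.rpow_neg hy.le]
  have h2 : (1 + Q * |bb y|) ^ α ≤ 8 * (1 + Q * |bb x|) ^ α := by
    calc _ ≤ (8 * (1 + Q * |bb x|)) ^ α := by gcongr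
      _ = 8 ^ α * (1 + Q * |bb x|) ^ α := Real.mul_rpow (by norm_num) hx.le
      _ ≤ 8 ^ (1:ℝ) * (1 + Q * |bb x|) ^ α := by gcongr; norm_num
      _ = _ := by rw [Real.rpow_one]
  have p1 : 0 < (1 + Q * |bb x|) ^ α := by positivity
  have p2 : 0 < (1 + Q * |bb y|) ^ α := by positivity
  rw [← div_eq_mul_inv, le_div_iff₀ p2, inv_mul_le_iff₀ p1]
  linarith

/-- One-dimensional singular integral. -/
lemma sing_fin (α : ℝ) (hα : 0 ≤ α) (hα1 : α < 1) (L : ℝ) (hL : 0 ≤ L) :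
    ∫⁻ x in Icc (-L) L, (ENNReal.ofReal |x|) ^ (-α) < ⊤ := by
  have h1 : ∫⁻ x in Ioc 0 L, (ENNReal.ofReal |x|) ^ (-α) < ⊤ := by
    have hi : IntegrableOn (fun x : ℝ => x ^ (-α)) (Ioc 0 L) := by
      have := intervalIntegral.intervalIntegrable_rpow' (r := -α) (a := 0) (b := L) (by linarith)
      rwa [intervalIntegrable_iff_integrableOn_Ioc_of_le hL] at this
    have := hi.lintegral_lt_top
    refine lt_of_le_of_lt (le_of_eq ?_) this
    apply setLIntegral_congr_fun measurableSet_Ioc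
    intro x hx
    simp only
    rw [abs_of_pos hx.1, ENNReal.ofReal_rpow_of_pos hx.1]
  have h2 : ∫⁻ x in Ico (-L) 0, (ENNReal.ofReal |x|) ^ (-α) < ⊤ := by
    have := (Measure.measurePreserving_neg (volume : Measure ℝ)).setLIntegral_comp_preimage
      (s := Ioc 0 L) measurableSet_Ioc (f := fun x => (ENNReal.ofReal |x|) ^ (-α))
      (by fun_prop)
    simp only [abs_neg] at this
    rw [← this] at h1
    convert h1 using 3
    ext x; simp only [mem_Ico, mem_preimage, mem_Ioc]
    constructor <;> rintro ⟨h, h'⟩ <;> constructor <;> linarith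
  have hsub : Icc (-L) L ⊆ (Ico (-L) 0 ∪ Ioc 0 L) ∪ {0} := by
    intro x hx
    rcases lt_trichotomy x 0 with h | h | h
    · exact Or.inl (Or.inl ⟨hx.1, h⟩)
    · exact Or.inr h
    · exact Or.inl (Or.inr ⟨h, hx.2⟩)
  calc _ ≤ ∫⁻ x in (Ico (-L) 0 ∪ Ioc 0 L) ∪ {0}, (ENNReal.ofReal |x|) ^ (-α) :=
        lintegral_mono_set hsub
    _ ≤ _ := (lintegral_union_le _ _ _).trans (add_le_add_left (lintegral_union_le _ _ _) _)
    _ < ⊤ := by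
      simp only [Measure.restrict_singleton, Real.volume_singleton, zero_smul,
        lintegral_zero_measure, add_zero]
      exact ENNReal.add_lt_top.2 ⟨h2, h1⟩

lemma bb_lower (φ : ℝ) (h1 : |φ| ≤ 2 * π) : min |φ - π| |φ + π| ≤ π * |bb φ| := by
  have hpi := Real.pi_pos
  have hc : Real.sin ((φ + π) / 2) = Real.sin (π / 2 - |φ| / 2) := by
    rw [show (φ + π) / 2 = φ / 2 + π / 2 by ring, Real.sin_add_pi_div_two, Real.sin_pi_div_two_sub]
    rw [show |φ| / 2 = |φ / 2| by rw [abs_div]; norm_num, Real.cos_abs]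
  have hv : |π / 2 - |φ| / 2| ≤ π / 2 := by
    rw [abs_le]; constructor <;> linarith [abs_nonneg φ]
  have hs := Real.mul_abs_le_abs_sin hv
  have h2 : 1 ≤ √2 := by rw [Real.one_le_sqrt]; norm_num
  have h3 : |π - (|φ|)| ≤ π * |bb φ| := by
    rw [bb, abs_mul, abs_of_nonneg (Real.sqrt_nonneg _), hc]
    have h4 : |π / 2 - |φ| / 2| = |π - (|φ|)| / 2 := by
      rw [← sub_div, abs_div]; norm_num
    rw [h4] at hs
    have h5 : |π - (|φ|)| ≤ π * |Real.sin (π / 2 - |φ| / 2)| := by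
      have := mul_le_mul_of_nonneg_left hs hpi.le
      have e : π * (2 / π * (|π - (|φ|)| / 2)) = |π - (|φ|)| := by field_simp
      rw [e] at this; exact this
    have h6 : 0 ≤ |Real.sin (π / 2 - |φ| / 2)| := abs_nonneg _
    have h7 : 0 ≤ π * |Real.sin (π / 2 - |φ| / 2)| := by positivity
    nlinarith
  refine le_trans ?_ h3
  rcases abs_cases φ with ⟨h, _⟩ | ⟨h, _⟩
  · rw [h, abs_sub_comm]; exact min_le_left _ _
  · rw [h, sub_neg_eq_add, add_comm]; exact min_le_right _ _

lemma bb_sing_fin (α : ℝ) (hα : 0 ≤ α) (hα1 : α < 1) :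
    ∫⁻ φ in Icc (-(2 * π)) (2 * π), (ENNReal.ofReal |bb φ|) ^ (-α) < ⊤ := by
  have hpi := Real.pi_pos
  have hsh : ∀ c : ℝ, |c| ≤ π →
      ∫⁻ φ in Icc (-(2 * π)) (2 * π), (ENNReal.ofReal |φ + c|) ^ (-α) < ⊤ := by
    intro c hc
    rw [abs_le] at hc
    refine lt_of_le_of_lt ?_ (sing_fin α hα hα1 (3 * π) (by positivity))
    rw [← (measurePreserving_add_right (volume : Measure ℝ) c).setLIntegral_comp_preimage
      measurableSet_Icc (f := fun x => (ENNReal.ofReal |x|) ^ (-α)) (by fun_prop)]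
    apply lintegral_mono_set
    intro x hx
    simp only [mem_preimage, mem_Icc] at hx ⊢
    constructor <;> linarith
  have hA := hsh (-π) (by rw [abs_neg, abs_of_pos hpi])
  have hB := hsh π (by rw [abs_of_pos hpi])
  calc _ ≤ ∫⁻ φ in Icc (-(2 * π)) (2 * π), (ENNReal.ofReal π) ^ α *
        ((ENNReal.ofReal |φ + -π|) ^ (-α) + (ENNReal.ofReal |φ + π|) ^ (-α)) := by
        apply setLIntegral_mono' measurableSet_Icc
        intro φ hφ
        have hl := bb_lower φ (abs_le.2 hφ)
        have hm : (ENNReal.ofReal (min |φ - π| |φ + π|)) ^ (-α) ≤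
            (ENNReal.ofReal |φ + -π|) ^ (-α) + (ENNReal.ofReal |φ + π|) ^ (-α) := by
          rcases min_choice |φ - π| |φ + π| with h | h
          · rw [h, sub_eq_add_neg]; exact le_self_add
          · rw [h]; exact le_add_self
        refine le_trans ?_ (mul_le_mul_right hm _)
        have h1 : ENNReal.ofReal (min |φ - π| |φ + π|) ≤ ENNReal.ofReal π * ENNReal.ofReal |bb φ| := by
          rw [← ENNReal.ofReal_mul hpi.le]; exact ENNReal.ofReal_le_ofReal hl
        have h2 : (ENNReal.ofReal π * ENNReal.ofReal |bb φ|) ^ (-α) ≤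
            (ENNReal.ofReal (min |φ - π| |φ + π|)) ^ (-α) := by
          rw [ENNReal.rpow_neg, ENNReal.rpow_neg]; gcongr
        refine le_trans (le_of_eq ?_) (mul_le_mul_right h2 _)
        have hp0 : ENNReal.ofReal π ≠ 0 := by simpa using hpi
        rw [ENNReal.rpow_neg, ENNReal.rpow_neg, ENNReal.mul_rpow_of_nonneg _ _ hα,
          ENNReal.mul_inv, ← mul_assoc, ENNReal.mul_inv_cancel, one_mul]
        · simp [hp0]
        · exact ENNReal.rpow_ne_top_of_nonneg hα ENNReal.ofReal_ne_top
        · left; simp [hp0]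
        · left; exact ENNReal.rpow_ne_top_of_nonneg hα ENNReal.ofReal_ne_top
    _ < ⊤ := by
        rw [lintegral_const_mul _ (by fun_prop), lintegral_add_left (by fun_prop)]
        exact ENNReal.mul_lt_top (ENNReal.rpow_lt_top_of_nonneg hα ENNReal.ofReal_ne_top)
          (ENNReal.add_lt_top.2 ⟨hA, hB⟩)

lemma Wn_int (α : ℝ) (hα : 0 ≤ α) (hα1 : α < 1) : ∃ C : ℝ≥0∞, C ≠ ⊤ ∧ ∀ Q : ℝ, 1 ≤ Q →
    ∀ t ∈ Icc 0 (2 * π),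
      ∫⁻ θ in Ico 0 (2 * π), Wn Q α (t - θ) ≤ C * ENNReal.ofReal (Q ^ (-α)) ∧
      ∫⁻ θ in Ico 0 (2 * π), Wn Q α (θ - t) ≤ C * ENNReal.ofReal (Q ^ (-α)) := by
  have hpi := Real.pi_pos
  refine ⟨_, (bb_sing_fin α hα hα1).ne, ?_⟩
  intro Q hQ t ht
  have hQ0 : 0 < Q := by linarith
  have hpt : ∀ φ, Wn Q α φ ≤ (ENNReal.ofReal |bb φ|) ^ (-α) * ENNReal.ofReal (Q ^ (-α)) := by
    intro φ
    unfold Wn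
    rw [← ENNReal.ofReal_rpow_of_pos (by positivity), ← ENNReal.ofReal_rpow_of_pos (by positivity)]
    have h0 : ENNReal.ofReal Q ≠ 0 := by simpa using hQ0
    rw [ENNReal.rpow_neg, ENNReal.rpow_neg, ENNReal.rpow_neg, ← ENNReal.mul_inv,
      ← ENNReal.mul_rpow_of_nonneg _ _ hα, ← ENNReal.ofReal_mul (abs_nonneg _)]
    · gcongr
      linarith
    · right; exact ENNReal.rpow_ne_top_of_nonneg hα ENNReal.ofReal_ne_top
    · right; simp [h0]
  have hbig : ∫⁻ φ in Icc (-(2 * π)) (2 * π), Wn Q α φ ≤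
      (∫⁻ φ in Icc (-(2 * π)) (2 * π), (ENNReal.ofReal |bb φ|) ^ (-α)) *
        ENNReal.ofReal (Q ^ (-α)) := by
    rw [← lintegral_mul_const' _ _ ENNReal.ofReal_ne_top]
    exact lintegral_mono hpt
  constructor
  · refine le_trans ?_ hbig
    rw [← (Measure.measurePreserving_sub_left (volume : Measure ℝ) t).setLIntegral_comp_preimage
      measurableSet_Icc (Wn_meas Q α)]
    apply lintegral_mono_set
    intro x hx
    simp only [mem_preimage, mem_Icc, mem_Ico] at hx ht ⊢
    constructor <;> linarith
  · refine le_trans ?_ hbig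
    rw [← (measurePreserving_sub_right (volume : Measure ℝ) t).setLIntegral_comp_preimage
      measurableSet_Icc (Wn_meas Q α)]
    apply lintegral_mono_set
    intro x hx
    simp only [mem_preimage, mem_Icc, mem_Ico] at hx ht ⊢
    constructor <;> linarith

lemma hoelder_r (p : ℝ) (hp : 4 ≤ p) (Φ : ℝ → ℝ≥0∞) :
    (∫⁻ r in Ioc (0:ℝ) (4 / 3), ENNReal.ofReal (r ^ (1 / 2 : ℝ)) * Φ r) ^ p ≤
      4 ^ (p - 1) * ∫⁻ r in Ioc (0:ℝ) (4 / 3), ENNReal.ofReal r * Φ r ^ p := by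
  have hp1 : 0 < p - 1 := by linarith
  have hp0 : 0 < p := by linarith
  set u : ℝ := 1 / (2 * (p - 1)) with hu
  have hu0 : 0 ≤ u := by positivity
  have hu1 : u ≤ 1 / 2 := by
    rw [hu]; apply one_div_le_one_div_of_le <;> linarith
  set κ : ℝ → ℝ≥0∞ := fun r => ENNReal.ofReal (r ^ (1 / 2 - u)) with hκ
  have h1 : ∫⁻ r in Ioc (0:ℝ) (4 / 3), ENNReal.ofReal (r ^ (1 / 2 : ℝ)) * Φ r =
      ∫⁻ r in Ioc (0:ℝ) (4 / 3), κ r * (ENNReal.ofReal (r ^ u) * Φ r) := by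
    apply setLIntegral_congr_fun measurableSet_Ioc
    intro r hr
    have hr0 : 0 < r := hr.1
    simp only [hκ]
    rw [← mul_assoc, ← ENNReal.ofReal_mul (by positivity), ← Real.rpow_add hr.1]
    congr 3; ring
  have h2 : ∫⁻ r in Ioc (0:ℝ) (4 / 3), κ r * (ENNReal.ofReal (r ^ u) * Φ r) ^ p =
      ∫⁻ r in Ioc (0:ℝ) (4 / 3), ENNReal.ofReal r * Φ r ^ p := by
    apply setLIntegral_congr_fun measurableSet_Ioc
    intro r hr
    have hr0 : 0 < r := hr.1
    simp only [hκ]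
    rw [ENNReal.mul_rpow_of_nonneg _ _ hp0.le, ENNReal.ofReal_rpow_of_pos (by positivity),
      ← mul_assoc, ← ENNReal.ofReal_mul (by positivity), ← Real.rpow_mul hr0.le,
      ← Real.rpow_add hr.1]
    congr 2
    rw [show 1 / 2 - u + u * p = 1 by rw [hu]; field_simp; ring, Real.rpow_one]
  have h3 : ∫⁻ r in Ioc (0:ℝ) (4 / 3), κ r ≤ 4 := by
    calc _ ≤ ∫⁻ r in Ioc (0:ℝ) (4 / 3), ENNReal.ofReal 2 := by
          apply setLIntegral_mono' measurableSet_Ioc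
          intro r hr
          apply ENNReal.ofReal_le_ofReal
          calc r ^ (1 / 2 - u) ≤ 2 ^ (1 / 2 - u) := by
                apply Real.rpow_le_rpow hr.1.le (by linarith [hr.2]) (by linarith)
            _ ≤ 2 ^ (1:ℝ) := by
                apply Real.rpow_le_rpow_of_exponent_le (by norm_num) (by linarith)
            _ = 2 := Real.rpow_one _
      _ ≤ 4 := by
          rw [setLIntegral_const, Real.volume_Ioc, ← ENNReal.ofReal_mul (by norm_num),
            show (4 : ℝ≥0∞) = ENNReal.ofReal 4 by simp]
          apply ENNReal.ofReal_le_ofReal; norm_num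
  rw [h1]
  refine (jensen_nm _ κ _ ?_ (fun _ => ENNReal.ofReal_lt_top) p (by linarith)).trans ?_
  · simp only [hκ]; fun_prop
  · rw [h2]; gcongr

lemma ang_est (α : ℝ) (hα : 0 ≤ α) (hα1 : α < 1) (p : ℝ) (hp : 4 ≤ p) :
    ∃ D : ℝ≥0∞, D ≠ ⊤ ∧ ∀ Q : ℝ, 1 ≤ Q → ∀ g : ℝ → ℝ → ℝ≥0∞,
      ∫⁻ θ in Ico 0 (2 * π), (∫⁻ r in Ioc (0:ℝ) (4 / 3), ENNReal.ofReal (r ^ (1 / 2 : ℝ)) *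
        ∫⁻ θ' in Ico 0 (2 * π), Wn Q α (θ - θ') * g r θ') ^ p ≤
      D * ENNReal.ofReal (Q ^ (-α)) ^ p *
        ∫⁻ r in Ioi (0:ℝ), (∫⁻ θ' in Ico 0 (2 * π), g r θ' ^ p) * ENNReal.ofReal r := by
  obtain ⟨C, hC, hCi⟩ := Wn_int α hα hα1
  have hpi := Real.pi_pos
  have hp0 : 0 < p := by linarith
  have hp1 : 0 < p - 1 := by linarith
  refine ⟨8 ^ p * 4 ^ (p - 1) * C ^ (p - 1) * (8 * C), ?_, ?_⟩
  · have := ENNReal.rpow_ne_top_of_nonneg hp1.le hC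
    finiteness
  intro Q hQ g
  have hQ0 : 0 < Q := by linarith
  set q := ENNReal.ofReal (Q ^ (-α)) with hq
  have hqt : q ≠ ⊤ := ENNReal.ofReal_ne_top
  have hq0 : q ≠ 0 := by
    have : 0 < Q ^ (-α) := by positivity
    simpa [hq] using this
  set N := ⌈Q⌉₊ with hN
  have hNQ : Q ≤ N := Nat.le_ceil Q
  have hN0 : (0:ℝ) < N := by linarith
  set h : ℝ := 2 * π / N with hh
  have hh0 : 0 < h := by positivity
  have hNh : N * h = 2 * π := by rw [hh]; field_simp
  have hQh : Q * h ≤ 7 := by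
    have : Q * h ≤ N * h := by gcongr
    rw [hNh] at this
    linarith [Real.pi_lt_d2]
  have hcell : ∀ i : ℕ, ∀ θ ∈ Ico (i * h) ((i + 1) * h), Q * |θ - i * h| ≤ 7 := by
    intro i θ hθ
    rw [abs_of_nonneg (by linarith [hθ.1])]
    refine le_trans ?_ hQh
    gcongr
    linarith [hθ.2]
  have hgridmem : ∀ i ∈ Finset.range N, (i:ℝ) * h ∈ Icc 0 (2 * π) := by
    intro i hi
    have : (i:ℝ) ≤ N := by exact_mod_cast (Finset.mem_range.1 hi).le
    refine ⟨by positivity, ?_⟩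
    rw [← hNh]; gcongr
  set Φ : ℕ → ℝ → ℝ≥0∞ := fun i r =>
    ∫⁻ θ' in Ico 0 (2 * π), Wn Q α (i * h - θ') * g r θ' with hΦ
  set Ψ : ℕ → ℝ → ℝ≥0∞ := fun i r =>
    ∫⁻ θ' in Ico 0 (2 * π), Wn Q α (i * h - θ') * g r θ' ^ p with hΨ
  have hΦΨ : ∀ i ∈ Finset.range N, ∀ r, Φ i r ^ p ≤ (C * q) ^ (p - 1) * Ψ i r := by
    intro i hi r
    refine (jensen_nm (volume.restrict (Ico 0 (2 * π))) (fun θ' => Wn Q α (i * h - θ')) (g r)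
      ((Wn_meas Q α).comp (by fun_prop)) (fun _ => Wn_lt_top _ _ _) p (by linarith)).trans ?_
    gcongr
    exact (hCi Q hQ _ (hgridmem i hi)).1
  have hsumΨ : ∀ r, ∑ i ∈ Finset.range N, ENNReal.ofReal h * Ψ i r ≤
      8 * C * q * ∫⁻ θ' in Ico 0 (2 * π), g r θ' ^ p := by
    intro r
    calc _ = ∑ i ∈ Finset.range N, ∫⁻ θ' in Ico 0 (2 * π),
            ENNReal.ofReal h * (Wn Q α (i * h - θ') * g r θ' ^ p) := by
          refine Finset.sum_congr rfl fun i _ => ?_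
          rw [lintegral_const_mul' _ _ ENNReal.ofReal_ne_top]
      _ ≤ ∫⁻ θ' in Ico 0 (2 * π), ∑ i ∈ Finset.range N,
            ENNReal.ofReal h * (Wn Q α (i * h - θ') * g r θ' ^ p) := sum_lintegral_le _ _ _
      _ ≤ ∫⁻ θ' in Ico 0 (2 * π), 8 * C * q * g r θ' ^ p := by
          apply setLIntegral_mono' measurableSet_Ico
          intro θ' hθ'
          have : ∑ i ∈ Finset.range N, ENNReal.ofReal h * Wn Q α (i * h - θ') ≤ 8 * C * q := by
            calc _ ≤ ∑ i ∈ Finset.range N, ∫⁻ θ in Ico (i * h) ((i + 1) * h),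
                    8 * Wn Q α (θ - θ') := by
                  refine Finset.sum_le_sum fun i _ => ?_
                  have e : ENNReal.ofReal h * Wn Q α (i * h - θ') =
                      ∫⁻ θ in Ico (i * h) ((i + 1) * h), Wn Q α (i * h - θ') := by
                    rw [setLIntegral_const, Real.volume_Ico, mul_comm]
                    congr 2; ring
                  rw [e]
                  apply setLIntegral_mono' measurableSet_Ico
                  intro θ hθ
                  apply Wn_comp Q α hQ hα hα1.le
                  rw [show (i * h - θ' - (θ - θ')) = -(θ - i * h) by ring, abs_neg]
                  exact hcell i θ hθ
              _ = ∫⁻ θ in Ico 0 (N * h), 8 * Wn Q α (θ - θ') := (lintegral_grid _ h hh0.le N).symm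
              _ = 8 * ∫⁻ θ in Ico 0 (2 * π), Wn Q α (θ - θ') := by
                  rw [hNh, lintegral_const_mul' _ _ (by norm_num)]
              _ ≤ 8 * (C * q) := by
                  gcongr
                  exact (hCi Q hQ θ' ⟨hθ'.1, hθ'.2.le⟩).2
              _ = _ := by ring
          calc _ = (∑ i ∈ Finset.range N, ENNReal.ofReal h * Wn Q α (i * h - θ')) * g r θ' ^ p := by
                rw [Finset.sum_mul]; simp only [mul_assoc]
            _ ≤ _ := by gcongr
      _ = _ := lintegral_const_mul' _ _ (by finiteness)
  have hX : ∀ i : ℕ, ∀ θ ∈ Ico (i * h) ((i + 1) * h),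
      (∫⁻ r in Ioc (0:ℝ) (4 / 3), ENNReal.ofReal (r ^ (1 / 2 : ℝ)) *
        ∫⁻ θ' in Ico 0 (2 * π), Wn Q α (θ - θ') * g r θ') ≤
      8 * ∫⁻ r in Ioc (0:ℝ) (4 / 3), ENNReal.ofReal (r ^ (1 / 2 : ℝ)) * Φ i r := by
    intro i θ hθ
    rw [← lintegral_const_mul' _ _ (by norm_num)]
    refine lintegral_mono fun r => ?_
    rw [mul_left_comm]
    gcongr
    simp only [hΦ]
    rw [← lintegral_const_mul' _ _ (by norm_num)]
    refine lintegral_mono fun θ' => ?_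
    rw [← mul_assoc]
    gcongr
    apply Wn_comp Q α hQ hα hα1.le
    rw [show θ - θ' - (i * h - θ') = θ - i * h by ring]
    exact hcell i θ hθ
  set K : ℝ≥0∞ := 8 ^ p * 4 ^ (p - 1) * (C * q) ^ (p - 1) with hK
  have hKt : K ≠ ⊤ := by
    have : (C * q) ^ (p - 1) ≠ ⊤ := ENNReal.rpow_ne_top_of_nonneg hp1.le (by finiteness)
    finiteness
  have hcellint : ∀ i ∈ Finset.range N, ∫⁻ θ in Ico (i * h) ((i + 1) * h),
      (∫⁻ r in Ioc (0:ℝ) (4 / 3), ENNReal.ofReal (r ^ (1 / 2 : ℝ)) *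
        ∫⁻ θ' in Ico 0 (2 * π), Wn Q α (θ - θ') * g r θ') ^ p ≤
      ∫⁻ r in Ioc (0:ℝ) (4 / 3), K * (ENNReal.ofReal r * (ENNReal.ofReal h * Ψ i r)) := by
    intro i hi
    calc _ ≤ ∫⁻ θ in Ico (i * h) ((i + 1) * h),
          (8 * ∫⁻ r in Ioc (0:ℝ) (4 / 3), ENNReal.ofReal (r ^ (1 / 2 : ℝ)) * Φ i r) ^ p := by
          apply setLIntegral_mono' measurableSet_Ico
          intro θ hθ
          exact ENNReal.rpow_le_rpow (hX i θ hθ) hp0.le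
      _ = ENNReal.ofReal h * (8 ^ p *
          (∫⁻ r in Ioc (0:ℝ) (4 / 3), ENNReal.ofReal (r ^ (1 / 2 : ℝ)) * Φ i r) ^ p) := by
          rw [setLIntegral_const, Real.volume_Ico, mul_comm, ENNReal.mul_rpow_of_nonneg _ _ hp0.le]
          congr 2; ring
      _ ≤ ENNReal.ofReal h * (8 ^ p * (4 ^ (p - 1) *
          ∫⁻ r in Ioc (0:ℝ) (4 / 3), ENNReal.ofReal r * Φ i r ^ p)) := by
          gcongr
          exact hoelder_r p hp (Φ i)
      _ ≤ ENNReal.ofReal h * (8 ^ p * (4 ^ (p - 1) *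
          ∫⁻ r in Ioc (0:ℝ) (4 / 3), ENNReal.ofReal r * ((C * q) ^ (p - 1) * Ψ i r))) := by
          gcongr with r
          exact hΦΨ i hi r
      _ = _ := by
          rw [← mul_assoc, ← mul_assoc, ← lintegral_const_mul' _ _ (by finiteness)]
          congr 1; ext r; rw [hK]; ring
  calc _ = ∑ i ∈ Finset.range N, ∫⁻ θ in Ico (i * h) ((i + 1) * h),
      (∫⁻ r in Ioc (0:ℝ) (4 / 3), ENNReal.ofReal (r ^ (1 / 2 : ℝ)) *
        ∫⁻ θ' in Ico 0 (2 * π), Wn Q α (θ - θ') * g r θ') ^ p := by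
        rw [← lintegral_grid _ h hh0.le N, hNh]
    _ ≤ ∑ i ∈ Finset.range N, ∫⁻ r in Ioc (0:ℝ) (4 / 3),
        K * (ENNReal.ofReal r * (ENNReal.ofReal h * Ψ i r)) := Finset.sum_le_sum hcellint
    _ ≤ ∫⁻ r in Ioc (0:ℝ) (4 / 3), ∑ i ∈ Finset.range N,
        K * (ENNReal.ofReal r * (ENNReal.ofReal h * Ψ i r)) := sum_lintegral_le _ _ _
    _ ≤ ∫⁻ r in Ioc (0:ℝ) (4 / 3), (K * (8 * C * q)) *
        ((∫⁻ θ' in Ico 0 (2 * π), g r θ' ^ p) * ENNReal.ofReal r) := by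
        refine lintegral_mono fun r => ?_
        simp only
        rw [← Finset.mul_sum, ← Finset.mul_sum]
        calc _ ≤ K * (ENNReal.ofReal r * (8 * C * q * ∫⁻ θ' in Ico 0 (2 * π), g r θ' ^ p)) := by
              gcongr; exact hsumΨ r
          _ = _ := by ring
    _ = (K * (8 * C * q)) * ∫⁻ r in Ioc (0:ℝ) (4 / 3),
        ((∫⁻ θ' in Ico 0 (2 * π), g r θ' ^ p) * ENNReal.ofReal r) :=
        lintegral_const_mul' _ _ (by finiteness)
    _ ≤ (K * (8 * C * q)) * ∫⁻ r in Ioi (0:ℝ),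
        ((∫⁻ θ' in Ico 0 (2 * π), g r θ' ^ p) * ENNReal.ofReal r) := by
        exact mul_le_mul_right (lintegral_mono_set Ioc_subset_Ioi_self) _
    _ = _ := by
        congr 1
        have : q ^ p = q ^ (p - 1) * q := by
          conv_lhs => rw [show p = (p - 1) + 1 by ring, ENNReal.rpow_add _ _ hq0 hqt]
          rw [ENNReal.rpow_one]
        rw [hK, this, ENNReal.mul_rpow_of_nonneg _ _ hp1.le]
        ring

/-- The radial weight integral. -/
def Srad (Q α p : ℝ) : ℝ≥0∞ :=
  ∫⁻ r in Ioc (0:ℝ) (4 / 3), ENNReal.ofReal (((Q ^ 2)⁻¹ + r) ^ (-α / 2)) ^ p * ENNReal.ofReal r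

lemma Srad_pt (η r α p : ℝ) (hη : 0 < η) (hr : 0 < r) (hp : 0 < p) :
    ENNReal.ofReal ((η + r) ^ (-α / 2)) ^ p * ENNReal.ofReal r =
      ENNReal.ofReal ((η + r) ^ (-(α * p / 2)) * r) := by
  rw [ENNReal.ofReal_rpow_of_pos (by positivity), ← ENNReal.ofReal_mul (by positivity),
    ← Real.rpow_mul (by positivity)]
  congr 3; ring

lemma Srad_big (Q α p : ℝ) (hQ : 1 ≤ Q) (hp : 0 < p) (h : 2 < α * p / 2) :
    Srad Q α p ≤ ENNReal.ofReal (((Q ^ 2)⁻¹) ^ (2 - α * p / 2) / (α * p / 2 - 2)) := by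
  have hQ0 : 0 < Q := by linarith
  set η := (Q ^ 2)⁻¹ with hη
  have hη0 : 0 < η := by positivity
  set e := 1 - α * p / 2 with he
  have he1 : e < -1 := by rw [he]; linarith
  calc Srad Q α p ≤ ∫⁻ r in Ioc (0:ℝ) (4 / 3), ENNReal.ofReal ((r + η) ^ e) := by
        apply setLIntegral_mono' measurableSet_Ioc
        intro r hr
        rw [Srad_pt η r α p hη0 hr.1 hp]
        apply ENNReal.ofReal_le_ofReal
        have hr0 := hr.1
        calc (η + r) ^ (-(α * p / 2)) * r ≤ (η + r) ^ (-(α * p / 2)) * (η + r) := by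
              gcongr; linarith
          _ = (r + η) ^ e := by
              rw [← Real.rpow_add_one (by positivity), add_comm η r]; congr 1; rw [he]; ring
    _ ≤ ∫⁻ r in (fun r => r + η) ⁻¹' (Ioi η), ENNReal.ofReal ((r + η) ^ e) := by
        apply lintegral_mono_set
        intro r hr
        simp only [mem_preimage, mem_Ioi]; linarith [hr.1]
    _ = ∫⁻ t in Ioi η, ENNReal.ofReal (t ^ e) :=
        (measurePreserving_add_right (volume : Measure ℝ) η).setLIntegral_comp_preimage
          measurableSet_Ioi (f := fun t => ENNReal.ofReal (t ^ e)) (by fun_prop)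
    _ = ENNReal.ofReal (∫ t in Ioi η, t ^ e) := by
        rw [ofReal_integral_eq_lintegral_ofReal (integrableOn_Ioi_rpow_of_lt he1 hη0)]
        refine (ae_restrict_iff' measurableSet_Ioi).2 (ae_of_all _ fun t ht => ?_)
        have : 0 < t := hη0.trans ht
        simp only [Pi.zero_apply]; positivity
    _ = _ := by
        rw [integral_Ioi_rpow_of_lt he1 hη0]
        congr 1
        rw [show e + 1 = 2 - α * p / 2 by rw [he]; ring, neg_div, ← div_neg]
        congr 1; ring

lemma Srad_small (α p : ℝ) (hα : 0 ≤ α) (hp : 0 < p) (h : α * p / 2 < 2) :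
    ∃ C : ℝ≥0∞, C ≠ ⊤ ∧ ∀ Q : ℝ, 1 ≤ Q → Srad Q α p ≤ C := by
  have hi : IntegrableOn (fun x : ℝ => x ^ (1 - α * p / 2)) (Ioc 0 (4 / 3)) := by
    have := intervalIntegral.intervalIntegrable_rpow' (r := 1 - α * p / 2) (a := 0) (b := 4 / 3)
      (by linarith)
    rwa [intervalIntegrable_iff_integrableOn_Ioc_of_le (by norm_num)] at this
  refine ⟨_, hi.lintegral_lt_top.ne, fun Q hQ => ?_⟩
  apply setLIntegral_mono' measurableSet_Ioc
  intro r hr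
  have hr0 := hr.1
  have hη0 : 0 < (Q ^ 2)⁻¹ := by positivity
  rw [Srad_pt _ r α p hη0 hr.1 hp]
  apply ENNReal.ofReal_le_ofReal
  calc ((Q ^ 2)⁻¹ + r) ^ (-(α * p / 2)) * r ≤ r ^ (-(α * p / 2)) * r := by
        gcongr ?_ * r
        apply Real.rpow_le_rpow_of_nonpos hr0 (by linarith)
        have : 0 ≤ α * p / 2 := by positivity
        linarith
    _ = _ := by rw [← Real.rpow_add_one hr0.ne']; congr 1; ring

lemma TH_pt (δ : ℝ) (a : ℝ → ℂ) (β χ : ℝ → ℝ) (j : ℕ) (c Q α : ℝ) (hc : 0 ≤ c) (hQ : 1 ≤ Q)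
    (hK : ∀ r₁ r₂ φ : ℝ, 0 < r₁ → 0 < r₂ →
      (4 / 3 < r₁ + r₂ → ((χ (bb φ) : ℝ) : ℂ) * Hker δ a β j r₁ r₂ φ = 0) ∧
      ‖((χ (bb φ) : ℝ) : ℂ) * Hker δ a β j r₁ r₂ φ‖ ≤
        c * ((Q ^ 2)⁻¹ + r₁) ^ (-α / 2) * r₂ ^ (-(1 / 2) : ℝ) * (1 + Q * |bb φ|) ^ (-α))
    (f : ℝ → ℝ → ℂ) (r₁ θ₁ : ℝ) (h1 : 0 < r₁) :
    (4 / 3 < r₁ → TH δ a β χ j f r₁ θ₁ = 0) ∧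
    ‖TH δ a β χ j f r₁ θ₁‖ₑ ≤ ENNReal.ofReal c * ENNReal.ofReal (((Q ^ 2)⁻¹ + r₁) ^ (-α / 2)) *
      ∫⁻ r in Ioc (0:ℝ) (4 / 3), ENNReal.ofReal (r ^ (1 / 2 : ℝ)) *
        ∫⁻ θ' in Ico 0 (2 * π), Wn Q α (θ₁ - θ') * ‖f r θ'‖ₑ := by
  have hQ0 : 0 < Q := by linarith
  constructor
  · intro h
    unfold TH
    rw [setIntegral_congr_fun (g := fun _ => (0:ℂ)) measurableSet_Ioi]
    · simp
    · intro r₂ hr₂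
      have hr₂' : 0 < r₂ := hr₂
      have : ∀ φ, ((χ (bb φ) : ℝ) : ℂ) * Hker δ a β j r₁ r₂ φ = 0 := fun φ =>
        (hK r₁ r₂ φ h1 hr₂').1 (by linarith)
      simp [this]
  · unfold TH
    refine (enorm_integral_le_lintegral_enorm _).trans ?_
    rw [← Ioc_union_Ioi_eq_Ioi (show (0:ℝ) ≤ 4 / 3 by norm_num)]
    refine (lintegral_union_le _ _ _).trans ?_
    have hz : ∫⁻ r₂ in Ioi (4 / 3 : ℝ), ‖(∫ θ₂ in Set.Ico (0 : ℝ) (2 * Real.pi),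
      ((χ (bb (θ₁ - θ₂)) : ℝ) : ℂ) * Hker δ a β j r₁ r₂ (θ₁ - θ₂) * f r₂ θ₂) * (r₂ : ℂ)‖ₑ = 0 := by
      rw [setLIntegral_congr_fun (g := fun _ => 0) measurableSet_Ioi]
      · simp
      · intro r₂ hr₂
        have hr₂' : 4 / 3 < r₂ := hr₂
        have : ∀ φ, ((χ (bb φ) : ℝ) : ℂ) * Hker δ a β j r₁ r₂ φ = 0 := fun φ =>
          (hK r₁ r₂ φ h1 (by linarith)).1 (by linarith)
        simp [this]
    rw [hz, add_zero, ← lintegral_const_mul' _ _ (by finiteness)]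
    apply setLIntegral_mono' measurableSet_Ioc
    intro r₂ hr₂
    have hr0 : 0 < r₂ := hr₂.1
    rw [enorm_mul]
    have e2 : ‖(r₂ : ℂ)‖ₑ = ENNReal.ofReal r₂ := by
      rw [← ofReal_norm, Complex.norm_real, Real.norm_of_nonneg hr0.le]
    rw [e2]
    set U := ((Q ^ 2)⁻¹ + r₁) ^ (-α / 2) with hU
    have hU0 : 0 ≤ U := by positivity
    have hin : ‖∫ θ₂ in Set.Ico (0 : ℝ) (2 * Real.pi),
      ((χ (bb (θ₁ - θ₂)) : ℝ) : ℂ) * Hker δ a β j r₁ r₂ (θ₁ - θ₂) * f r₂ θ₂‖ₑ ≤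
      ENNReal.ofReal (c * U * r₂ ^ (-(1 / 2) : ℝ)) *
        ∫⁻ θ' in Ico 0 (2 * π), Wn Q α (θ₁ - θ') * ‖f r₂ θ'‖ₑ := by
      refine (enorm_integral_le_lintegral_enorm _).trans ?_
      rw [← lintegral_const_mul' _ _ (by finiteness)]
      refine lintegral_mono fun θ' => ?_
      rw [enorm_mul, ← mul_assoc]
      gcongr
      unfold Wn
      rw [← ENNReal.ofReal_mul (by positivity), ← ofReal_norm]
      exact ENNReal.ofReal_le_ofReal (hK r₁ r₂ (θ₁ - θ') h1 hr0).2
    calc _ ≤ (ENNReal.ofReal (c * U * r₂ ^ (-(1 / 2) : ℝ)) *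
        ∫⁻ θ' in Ico 0 (2 * π), Wn Q α (θ₁ - θ') * ‖f r₂ θ'‖ₑ) * ENNReal.ofReal r₂ := by gcongr
      _ = ENNReal.ofReal c * ENNReal.ofReal U *
        (ENNReal.ofReal (r₂ ^ (-(1 / 2) : ℝ)) * ENNReal.ofReal r₂) *
        ∫⁻ θ' in Ico 0 (2 * π), Wn Q α (θ₁ - θ') * ‖f r₂ θ'‖ₑ := by
          rw [ENNReal.ofReal_mul (by positivity), ENNReal.ofReal_mul hc]; ring
      _ = _ := by
          have e3 : ENNReal.ofReal (r₂ ^ (-(1 / 2) : ℝ)) * ENNReal.ofReal r₂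
              = ENNReal.ofReal (r₂ ^ (1 / 2 : ℝ)) := by
            rw [← ENNReal.ofReal_mul (by positivity), ← Real.rpow_add_one hr0.ne',
              show -(1 / 2 : ℝ) + 1 = 1 / 2 by norm_num]
          rw [e3, mul_assoc]

lemma main_est (δ : ℝ) (hδ : 0 ≤ δ) (a : ℝ → ℂ) (ha : IsSymbol0 a)
    (β : ℝ → ℝ) (hβ : ContDiff ℝ (⊤ : ℕ∞) β)
    (hβs : Function.support β ⊆ Set.Icc (3 / 8) (4 / 3))
    (ε : ℝ) (χ : ℝ → ℝ) (hχ : ContDiff ℝ (⊤ : ℕ∞) χ)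
    (hχs : Function.support χ ⊆ Set.Icc (-ε) ε)
    (α : ℝ) (hα : 0 ≤ α) (hα1 : α < 1) (p : ℝ) (hp : 4 ≤ p) :
    ∃ D : ℝ≥0∞, D ≠ ⊤ ∧ ∀ (j : ℕ) (Q : ℝ), 1 ≤ Q → (2:ℝ) ^ (j:ℝ) = Q ^ 2 → ∀ f : ℝ → ℝ → ℂ,
      polarLp p (TH δ a β χ j f) ≤ D * (2 : ℝ≥0∞) ^ (-(j : ℝ) * (3 / 2 + δ)) *
        (ENNReal.ofReal (Q ^ (-α)) * Srad Q α p ^ (1 / p)) * polarLp p f := by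
  obtain ⟨B, hB, hK⟩ := kernel_bound δ hδ a ha β hβ hβs ε χ hχ hχs
  obtain ⟨D, hD, hang⟩ := ang_est α hα hα1 p hp
  have hp0 : 0 < p := by linarith
  have hp1 : 0 ≤ 1 / p := by positivity
  refine ⟨ENNReal.ofReal B * D ^ (1 / p), ?_, ?_⟩
  · have := ENNReal.rpow_ne_top_of_nonneg hp1 hD
    finiteness
  intro j Q hQ hjQ f
  set t : ℝ := (2 : ℝ) ^ (-(j : ℝ) * (3 / 2 + δ)) with ht
  have ht0 : 0 ≤ t := by positivity
  have htE : (2 : ℝ≥0∞) ^ (-(j : ℝ) * (3 / 2 + δ)) = ENNReal.ofReal t := by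
    rw [ht, ← ENNReal.ofReal_rpow_of_pos (by norm_num)]; simp
  rw [htE]
  have hpt := TH_pt δ a β χ j (B * t) Q α (by positivity) hQ
    (fun r₁ r₂ φ h1 h2 => hK j Q r₁ r₂ φ α hQ hjQ h1 h2 hα hα1.le) f
  set c := ENNReal.ofReal (B * t) with hc
  set X : ℝ → ℝ≥0∞ := fun θ => ∫⁻ r in Ioc (0:ℝ) (4 / 3), ENNReal.ofReal (r ^ (1 / 2 : ℝ)) *
        ∫⁻ θ' in Ico 0 (2 * π), Wn Q α (θ - θ') * ‖f r θ'‖ₑ with hX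
  set q := ENNReal.ofReal (Q ^ (-α)) with hq
  set E : ℝ≥0∞ := ∫⁻ r in Set.Ioi (0 : ℝ),
      (∫⁻ θ in Set.Ico (0 : ℝ) (2 * Real.pi), (‖f r θ‖₊ : ℝ≥0∞) ^ p) * ENNReal.ofReal r with hE
  have hXp : ∫⁻ θ in Ico 0 (2 * π), X θ ^ p ≤ D * q ^ p * E := hang Q hQ (fun r θ => ‖f r θ‖ₑ)
  set R := D * q ^ p * E with hR
  have hr : ∫⁻ r in Set.Ioi (0 : ℝ),
      (∫⁻ θ in Set.Ico (0 : ℝ) (2 * Real.pi), (‖TH δ a β χ j f r θ‖₊ : ℝ≥0∞) ^ p) *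
        ENNReal.ofReal r ≤ Srad Q α p * (c ^ p * R) := by
    rw [← Ioc_union_Ioi_eq_Ioi (show (0:ℝ) ≤ 4 / 3 by norm_num)]
    refine (lintegral_union_le _ _ _).trans ?_
    have hz : ∫⁻ r in Ioi (4 / 3 : ℝ),
      (∫⁻ θ in Set.Ico (0 : ℝ) (2 * Real.pi), (‖TH δ a β χ j f r θ‖₊ : ℝ≥0∞) ^ p) *
        ENNReal.ofReal r = 0 := by
      rw [setLIntegral_congr_fun (g := fun _ => 0) measurableSet_Ioi]
      · simp
      · intro r hr
        have hr' : 4 / 3 < r := hr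
        have : ∀ θ, TH δ a β χ j f r θ = 0 := fun θ => (hpt r θ (by linarith)).1 hr'
        simp [this, hp0]
    rw [hz, add_zero]
    calc _ ≤ ∫⁻ r in Ioc (0:ℝ) (4 / 3),
          (ENNReal.ofReal (((Q ^ 2)⁻¹ + r) ^ (-α / 2)) ^ p * ENNReal.ofReal r) * (c ^ p * R) := by
          apply setLIntegral_mono' measurableSet_Ioc
          intro r hr
          set U := ENNReal.ofReal (((Q ^ 2)⁻¹ + r) ^ (-α / 2)) with hU
          have hUt : U ≠ ⊤ := ENNReal.ofReal_ne_top
          have hct : c ≠ ⊤ := ENNReal.ofReal_ne_top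
          have : ∫⁻ θ in Set.Ico (0 : ℝ) (2 * Real.pi), (‖TH δ a β χ j f r θ‖₊ : ℝ≥0∞) ^ p ≤
              (c * U) ^ p * R := by
            calc _ ≤ ∫⁻ θ in Set.Ico (0 : ℝ) (2 * Real.pi), (c * U) ^ p * X θ ^ p := by
                  refine lintegral_mono fun θ => ?_
                  rw [← ENNReal.mul_rpow_of_nonneg _ _ hp0.le]
                  exact ENNReal.rpow_le_rpow (hpt r θ hr.1).2 hp0.le
              _ = (c * U) ^ p * ∫⁻ θ in Set.Ico (0 : ℝ) (2 * Real.pi), X θ ^ p :=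
                  lintegral_const_mul' _ _ (ENNReal.rpow_ne_top_of_nonneg hp0.le (by finiteness))
              _ ≤ _ := by gcongr
          calc _ ≤ (c * U) ^ p * R * ENNReal.ofReal r := by gcongr
            _ = _ := by rw [ENNReal.mul_rpow_of_nonneg _ _ hp0.le]; ring
      _ = _ := by
          rw [lintegral_mul_const _ (by fun_prop)]
          rfl
  have hinv : ∀ x : ℝ≥0∞, (x ^ p) ^ (1 / p) = x := fun x => by
    rw [← ENNReal.rpow_mul, mul_one_div_cancel hp0.ne', ENNReal.rpow_one]
  calc polarLp p (TH δ a β χ j f) ≤ (Srad Q α p * (c ^ p * R)) ^ (1 / p) :=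
        ENNReal.rpow_le_rpow hr hp1
    _ = Srad Q α p ^ (1 / p) * (c * (D ^ (1 / p) * q * E ^ (1 / p))) := by
        rw [ENNReal.mul_rpow_of_nonneg _ _ hp1, ENNReal.mul_rpow_of_nonneg _ _ hp1, hR,
          ENNReal.mul_rpow_of_nonneg _ _ hp1, ENNReal.mul_rpow_of_nonneg _ _ hp1, hinv, hinv]
    _ = _ := by
        rw [hc, ENNReal.ofReal_mul hB]
        change _ = _ * E ^ (1 / p)
        ring

lemma Q_facts (j : ℕ) : ∃ Q : ℝ, 1 ≤ Q ∧ (2:ℝ) ^ (j:ℝ) = Q ^ 2 ∧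
    ∀ x : ℝ, ENNReal.ofReal (Q ^ x) = (2 : ℝ≥0∞) ^ ((j:ℝ) * x / 2) := by
  refine ⟨(2:ℝ) ^ ((j:ℝ) / 2), Real.one_le_rpow (by norm_num) (by positivity), ?_, ?_⟩
  · rw [← Real.rpow_natCast, ← Real.rpow_mul (by norm_num)]; congr 1; push_cast; ring
  · intro x
    rw [← Real.rpow_mul (by norm_num), ← ENNReal.ofReal_rpow_of_pos (by norm_num)]
    congr 1
    · simp
    · ring

theorem stmt13 (δ : ℝ) (hδ : 0 ≤ δ) (a : ℝ → ℂ) (ha : IsSymbol0 a)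
    (β : ℝ → ℝ) (hβ : ContDiff ℝ (⊤ : ℕ∞) β)
    (hβs : Function.support β ⊆ Set.Icc (3 / 8) (4 / 3)) :
    ∃ ε₀ : ℝ, 0 < ε₀ ∧ ∀ ε : ℝ, 0 < ε → ε ≤ ε₀ →
      ∀ χ : ℝ → ℝ, ContDiff ℝ (⊤ : ℕ∞) χ → (∀ x, χ (-x) = χ x) →
        Function.support χ ⊆ Set.Icc (-ε) ε →
        (∀ x ∈ Set.Icc (-(ε / 2)) (ε / 2), χ x = 1) →
        (∀ p : ℝ, 6 ≤ p → ∃ C : ℝ≥0, ∀ (j : ℕ), 1 ≤ j → ∀ f : ℝ → ℝ → ℂ,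
            polarLp p (TH δ a β χ j f) ≤
              (C : ℝ≥0∞) * (2 : ℝ≥0∞) ^ (-(j : ℝ) * (3 / 2 + δ)) *
                (2 : ℝ≥0∞) ^ (-2 * (j : ℝ) / p) * polarLp p f) ∧
        (∀ p : ℝ, 4 ≤ p → p < 6 → ∀ ε' : ℝ, 0 < ε' → ε' < 1 →
            ∃ C : ℝ≥0, ∀ (j : ℕ), 1 ≤ j → ∀ f : ℝ → ℝ → ℂ,
              polarLp p (TH δ a β χ j f) ≤
                (C : ℝ≥0∞) * (2 : ℝ≥0∞) ^ (-(j : ℝ) * (3 / 2 + δ)) *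
                  (2 : ℝ≥0∞) ^ (-(j : ℝ) * (2 / p - ε')) * polarLp p f) := by
  refine ⟨1, one_pos, ?_⟩
  intro ε _ _ χ hχ _ hχs _
  constructor
  · intro p hp
    have hp0 : 0 < p := by linarith
    have hp1 : 0 ≤ 1 / p := by positivity
    have hs : 2 < 3 / 4 * p / 2 := by linarith
    obtain ⟨D, hD, hm⟩ := main_est δ hδ a ha β hβ hβs ε χ hχ hχs (3 / 4) (by norm_num)
      (by norm_num) p (by linarith)
    set C1 : ℝ := 1 / (3 / 4 * p / 2 - 2) with hC1
    have hfin : D * ENNReal.ofReal C1 ^ (1 / p) ≠ ⊤ := by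
      have := ENNReal.rpow_ne_top_of_nonneg hp1 (ENNReal.ofReal_ne_top (r := C1))
      finiteness
    refine ⟨(D * ENNReal.ofReal C1 ^ (1 / p)).toNNReal, ?_⟩
    intro j _ f
    rw [ENNReal.coe_toNNReal hfin]
    obtain ⟨Q, hQ, hjQ, hQE⟩ := Q_facts j
    have hQ0 : 0 < Q := by linarith
    refine (hm j Q hQ hjQ f).trans ?_
    have hS := Srad_big Q (3 / 4) p hQ hp0 hs
    have e1 : ((Q ^ 2)⁻¹) ^ (2 - 3 / 4 * p / 2) / (3 / 4 * p / 2 - 2) =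
        C1 * Q ^ (3 / 4 * p - 4) := by
      rw [hC1, ← Real.rpow_natCast, ← Real.rpow_neg hQ0.le, ← Real.rpow_mul hQ0.le, div_eq_mul_one_div,
        mul_comm]
      congr 2; push_cast; ring
    have hC10 : 0 ≤ C1 := by
      rw [hC1]; apply one_div_nonneg.2; linarith
    rw [e1, ENNReal.ofReal_mul hC10] at hS
    have h2 : ENNReal.ofReal (Q ^ (-(3 / 4) : ℝ)) * Srad Q (3 / 4) p ^ (1 / p) ≤
        ENNReal.ofReal C1 ^ (1 / p) * (2 : ℝ≥0∞) ^ (-2 * (j : ℝ) / p) := by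
      calc _ ≤ ENNReal.ofReal (Q ^ (-(3 / 4) : ℝ)) *
            (ENNReal.ofReal C1 * ENNReal.ofReal (Q ^ (3 / 4 * p - 4))) ^ (1 / p) := by gcongr
        _ = ENNReal.ofReal C1 ^ (1 / p) * (ENNReal.ofReal (Q ^ (-(3 / 4) : ℝ)) *
            ENNReal.ofReal (Q ^ (3 / 4 * p - 4)) ^ (1 / p)) := by
            rw [ENNReal.mul_rpow_of_nonneg _ _ hp1]; ring
        _ = _ := by
            rw [hQE, hQE, ← ENNReal.rpow_mul, ← ENNReal.rpow_add _ _ (by norm_num) (by norm_num)]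
            congr 2
            field_simp
            ring
    calc _ ≤ D * (2 : ℝ≥0∞) ^ (-(j : ℝ) * (3 / 2 + δ)) *
          (ENNReal.ofReal C1 ^ (1 / p) * (2 : ℝ≥0∞) ^ (-2 * (j : ℝ) / p)) * polarLp p f := by
          gcongr
      _ = _ := by ring
  · intro p hp hp6 ε' hε hε1
    have hp0 : 0 < p := by linarith
    have hp1 : 0 < 1 / p := by positivity
    set e := min ε' (1 / p) with he
    have he0 : 0 < e := lt_min hε hp1
    have hee : e ≤ ε' := min_le_left _ _
    have hep : e ≤ 1 / p := min_le_right _ _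
    have hp4 : 1 / p ≤ 1 / 4 := one_div_le_one_div_of_le (by norm_num) hp
    set α := 4 * (1 / p) - 2 * e with hα
    have hα0 : 0 ≤ α := by linarith
    have hα1 : α < 1 := by linarith
    have hs : α * p / 2 < 2 := by
      have : α * p / 2 = 2 - e * p := by rw [hα]; field_simp; ring
      rw [this]
      have : 0 < e * p := by positivity
      linarith
    obtain ⟨D, hD, hm⟩ := main_est δ hδ a ha β hβ hβs ε χ hχ hχs α hα0 hα1 p hp
    obtain ⟨C1, hC1, hS⟩ := Srad_small α p hα0 hp0 hs
    have hfin : D * C1 ^ (1 / p) ≠ ⊤ := by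
      have := ENNReal.rpow_ne_top_of_nonneg hp1.le hC1
      finiteness
    refine ⟨(D * C1 ^ (1 / p)).toNNReal, ?_⟩
    intro j _ f
    rw [ENNReal.coe_toNNReal hfin]
    obtain ⟨Q, hQ, hjQ, hQE⟩ := Q_facts j
    refine (hm j Q hQ hjQ f).trans ?_
    have h2 : ENNReal.ofReal (Q ^ (-α)) * Srad Q α p ^ (1 / p) ≤
        (2 : ℝ≥0∞) ^ (-(j : ℝ) * (2 / p - ε')) * C1 ^ (1 / p) := by
      rw [hQE]
      gcongr
      · norm_num
      · have hj : (0:ℝ) ≤ j := by positivity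
        have : -α / 2 ≤ -(2 / p - ε') := by
          have : 2 / p = 2 * (1 / p) := by ring
          rw [this, hα]; linarith
        calc (j:ℝ) * -α / 2 = j * (-α / 2) := by ring
          _ ≤ j * (-(2 / p - ε')) := by gcongr
          _ = _ := by ring
      · exact hS Q hQ
    calc _ ≤ D * (2 : ℝ≥0∞) ^ (-(j : ℝ) * (3 / 2 + δ)) *
          ((2 : ℝ≥0∞) ^ (-(j : ℝ) * (2 / p - ε')) * C1 ^ (1 / p)) * polarLp p f := by
          gcongr
      _ = _ := by ring

end
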